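/- For every odd integer n with n ≥ 9, the following inequality holds: Σ_{k=1}^{(n-5)/2} ⌊(n-2k-1)/4⌋ > 1 + Σ_{k=1}^{⌊(n-5)/6⌋} ⌊(n-6k-1)/4⌋ + Σ_{k=1}^{⌊(n-9)/6⌋} ⌊(n-6k-5)/4⌋. -/

import Mathlib

theorem peel_Icc (f : ℕ → ℕ) (K : ℕ) :
    ∑ k ∈ Finset.Icc 1 (K + 1), f k = f 1 + ∑ k ∈ Finset.Icc 1 K, f (k + 1) := by
  induction K with
  | zero => simp
  | succ K ih =>
    rw [Finset.sum_Icc_succ_top (by omega), ih, Finset.sum_Icc_succ_top (by omega)]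
    ring

theorem stepA (n : ℕ) (hn : 9 ≤ n) :
    ∑ k ∈ Finset.Icc 1 ((n + 2 - 5) / 2), (n + 2 - 2 * k - 1) / 4 =
      (n - 1) / 4 + ∑ k ∈ Finset.Icc 1 ((n - 5) / 2), (n - 2 * k - 1) / 4 := by
  rw [show (n + 2 - 5) / 2 = (n - 5) / 2 + 1 by omega, peel_Icc]
  congr 1
  apply Finset.sum_congr rfl
  intro k _
  congr 1
  omega

theorem stepB (n : ℕ) (hn : 9 ≤ n) :
    ∑ k ∈ Finset.Icc 1 ((n + 6 - 5) / 6), (n + 6 - 6 * k - 1) / 4 =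
      (n - 1) / 4 + ∑ k ∈ Finset.Icc 1 ((n - 5) / 6), (n - 6 * k - 1) / 4 := by
  rw [show (n + 6 - 5) / 6 = (n - 5) / 6 + 1 by omega, peel_Icc]
  congr 1
  apply Finset.sum_congr rfl
  intro k _
  congr 1
  omega

theorem stepC (n : ℕ) (hn : 9 ≤ n) :
    ∑ k ∈ Finset.Icc 1 ((n + 6 - 9) / 6), (n + 6 - 6 * k - 5) / 4 =
      (n - 5) / 4 + ∑ k ∈ Finset.Icc 1 ((n - 9) / 6), (n - 6 * k - 5) / 4 := by
  rw [show (n + 6 - 9) / 6 = (n - 9) / 6 + 1 by omega, peel_Icc]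
  congr 1
  apply Finset.sum_congr rfl
  intro k _
  congr 1
  omega


/-- For every odd integer `n ≥ 9`,
`Σ_{k=1}^{(n-5)/2} ⌊(n-2k-1)/4⌋ > 1 + Σ_{k=1}^{⌊(n-5)/6⌋} ⌊(n-6k-1)/4⌋ +
Σ_{k=1}^{⌊(n-9)/6⌋} ⌊(n-6k-5)/4⌋`.  (All quantities appearing under the floors are
nonnegative in the given ranges, so natural-number division faithfully encodes the
floors.) -/
theorem sum_ineq_odd (n : ℕ) (hodd : Odd n) (hn : 9 ≤ n) :
    ∑ k ∈ Finset.Icc 1 ((n - 5) / 2), (n - 2 * k - 1) / 4 >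
      1 + ∑ k ∈ Finset.Icc 1 ((n - 5) / 6), (n - 6 * k - 1) / 4
        + ∑ k ∈ Finset.Icc 1 ((n - 9) / 6), (n - 6 * k - 5) / 4 := by
  induction n using Nat.strong_induction_on with
  | _ n ih =>
    by_cases h : n < 15
    · obtain ⟨m, hm⟩ := hodd
      have h3 : n = 9 ∨ n = 11 ∨ n = 13 := by omega
      rcases h3 with rfl | rfl | rfl <;> decide
    · obtain ⟨p, rfl⟩ : ∃ p, n = p + 6 := ⟨n - 6, by omega⟩
      have hp : Odd p := by
        obtain ⟨m, hm⟩ := hodd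
        exact ⟨m - 3, by omega⟩
      have h0 := ih p (by omega) hp (by omega)
      have a1 := stepA p (by omega)
      have a2 := stepA (p + 2) (by omega)
      have a3 := stepA (p + 2 + 2) (by omega)
      rw [stepB p (by omega), stepC p (by omega)]
      rw [show p + 6 = p + 2 + 2 + 2 by ring, a3, a2, a1]
      omega
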